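/- For every a, b, c ∈ ℂ, the formulas defining R_{a,b,c} determine a module over the N=2 Ramond algebra 𝔤: the prescribed operators on the ℤ/2-graded vector space with even basis {v_i, v_i^{+−} : i ∈ ℤ} and odd basis {v_i^+, v_i^- : i ∈ ℤ} satisfy all the defining relations of a 𝔤-module with c₀ = 0. -/

import Mathlib

open Submodule

/-- A module over the `N = 2` Ramond algebra `𝔤`: a `ℤ/2`-graded complex vector
space `V = even ⊕ odd` with parity-preserving operators `L m`, `H m`,
parity-reversing operators `Gp m` (`G_m^+`), `Gm m` (`G_m^-`), and a scalar `c₀`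
(the action of the central element `C`), subject to the defining relations. -/
structure RamondRep (V : Type) [AddCommGroup V] [Module ℂ V] : Type where
  L : ℤ → V →ₗ[ℂ] V
  H : ℤ → V →ₗ[ℂ] V
  Gp : ℤ → V →ₗ[ℂ] V
  Gm : ℤ → V →ₗ[ℂ] V
  c₀ : ℂ
  even : Submodule ℂ V
  odd : Submodule ℂ V
  grading : IsCompl even odd
  L_even : ∀ (m : ℤ), ∀ v ∈ even, L m v ∈ even
  L_odd : ∀ (m : ℤ), ∀ v ∈ odd, L m v ∈ odd
  H_even : ∀ (m : ℤ), ∀ v ∈ even, H m v ∈ even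
  H_odd : ∀ (m : ℤ), ∀ v ∈ odd, H m v ∈ odd
  Gp_even : ∀ (m : ℤ), ∀ v ∈ even, Gp m v ∈ odd
  Gp_odd : ∀ (m : ℤ), ∀ v ∈ odd, Gp m v ∈ even
  Gm_even : ∀ (m : ℤ), ∀ v ∈ even, Gm m v ∈ odd
  Gm_odd : ∀ (m : ℤ), ∀ v ∈ odd, Gm m v ∈ even
  rel_LL : ∀ (m n : ℤ) (v : V),
    L m (L n v) - L n (L m v) =
      ((n : ℂ) - (m : ℂ)) • L (m + n) v +
        ((1 / 12 : ℂ) * ((n : ℂ) ^ 3 - (n : ℂ)) *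
          (if m + n = 0 then (1 : ℂ) else 0) * c₀) • v
  rel_HH : ∀ (m n : ℤ) (v : V),
    H m (H n v) - H n (H m v) =
      ((1 / 3 : ℂ) * (m : ℂ) * (if m + n = 0 then (1 : ℂ) else 0) * c₀) • v
  rel_LH : ∀ (m n : ℤ) (v : V),
    L m (H n v) - H n (L m v) = (n : ℂ) • H (m + n) v
  rel_LGp : ∀ (m p : ℤ) (v : V),
    L m (Gp p v) - Gp p (L m v) = ((p : ℂ) - (m : ℂ) / 2) • Gp (p + m) v
  rel_LGm : ∀ (m p : ℤ) (v : V),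
    L m (Gm p v) - Gm p (L m v) = ((p : ℂ) - (m : ℂ) / 2) • Gm (p + m) v
  rel_HGp : ∀ (m p : ℤ) (v : V),
    H m (Gp p v) - Gp p (H m v) = Gp (m + p) v
  rel_HGm : ∀ (m p : ℤ) (v : V),
    H m (Gm p v) - Gm p (H m v) = -(Gm (m + p) v)
  rel_GpGm : ∀ (p q : ℤ) (v : V),
    Gp p (Gm q v) + Gm q (Gp p v) =
      (-2 : ℂ) • L (p + q) v + ((p : ℂ) - (q : ℂ)) • H (p + q) v +
        ((1 / 3 : ℂ) * ((p : ℂ) ^ 2 - 1 / 4) *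
          (if p + q = 0 then (1 : ℂ) else 0) * c₀) • v
  rel_GpGp : ∀ (p q : ℤ) (v : V), Gp p (Gp q v) + Gp q (Gp p v) = 0
  rel_GmGm : ∀ (p q : ℤ) (v : V), Gm p (Gm q v) + Gm q (Gm p v) = 0

namespace RamondRep

variable {V : Type} [AddCommGroup V] [Module ℂ V]

/-- The weight space `V_μ = {v ∈ V : L₀ v = μ v}`. -/
def wt (ρ : RamondRep V) (μ : ℂ) : Submodule ℂ V :=
  Module.End.eigenspace (ρ.L 0) μ

/-- The parity components, indexed by `ZMod 2`. -/
def parity (ρ : RamondRep V) (τ : ZMod 2) : Submodule ℂ V :=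
  if τ = 0 then ρ.even else ρ.odd

/-- `V` is a weight module: it is the sum of its weight spaces. -/
def IsWeight (ρ : RamondRep V) : Prop := (⨆ μ : ℂ, ρ.wt μ) = ⊤

/-- `V` is cuspidal: a weight module with uniformly bounded weight multiplicities
in each parity. -/
def Cuspidal (ρ : RamondRep V) : Prop :=
  ρ.IsWeight ∧ ∃ p : ℕ, ∀ (μ : ℂ) (τ : ZMod 2),
    Module.rank ℂ ↥(ρ.wt μ ⊓ ρ.parity τ) ≤ (p : Cardinal)

/-- A subspace invariant under all the operators. -/
def IsSubmod (ρ : RamondRep V) (W : Submodule ℂ V) : Prop :=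
  (∀ (m : ℤ), ∀ v ∈ W, ρ.L m v ∈ W) ∧ (∀ (m : ℤ), ∀ v ∈ W, ρ.H m v ∈ W) ∧
    (∀ (m : ℤ), ∀ v ∈ W, ρ.Gp m v ∈ W) ∧ (∀ (m : ℤ), ∀ v ∈ W, ρ.Gm m v ∈ W)

/-- A graded subspace invariant under all the operators. -/
def IsGradedSubmod (ρ : RamondRep V) (W : Submodule ℂ V) : Prop :=
  ρ.IsSubmod W ∧ W = (W ⊓ ρ.even) ⊔ (W ⊓ ρ.odd)

/-- The trivial representation: all operators act by zero. -/
def IsTrivialRep (ρ : RamondRep V) : Prop :=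
  ∀ (m : ℤ) (v : V), ρ.L m v = 0 ∧ ρ.H m v = 0 ∧ ρ.Gp m v = 0 ∧ ρ.Gm m v = 0

/-- `V` is simple: nontrivial, and its only graded submodules are `⊥` and `⊤`. -/
def IsSimple (ρ : RamondRep V) : Prop :=
  ¬ ρ.IsTrivialRep ∧
    ∀ W : Submodule ℂ V, ρ.IsGradedSubmod W → W = ⊥ ∨ W = ⊤

/-- `V` is generated by `v` as a `𝔤`-module. -/
def GeneratedBy (ρ : RamondRep V) (v : V) : Prop :=
  ∀ W : Submodule ℂ V, ρ.IsSubmod W → v ∈ W → W = ⊤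

/-- `V` is a highest weight module. -/
def IsHighestWeight (ρ : RamondRep V) : Prop :=
  ∃ v : V, v ≠ 0 ∧ ρ.GeneratedBy v ∧
    (∃ h h' : ℂ, ρ.L 0 v = h • v ∧ ρ.H 0 v = h' • v) ∧
    (∀ m : ℤ, 0 < m → ρ.L m v = 0 ∧ ρ.H m v = 0 ∧ ρ.Gp m v = 0 ∧ ρ.Gm m v = 0) ∧
    ρ.Gp 0 v = 0

/-- `V` is a lowest weight module. -/
def IsLowestWeight (ρ : RamondRep V) : Prop :=
  ∃ v : V, v ≠ 0 ∧ ρ.GeneratedBy v ∧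
    (∃ h h' : ℂ, ρ.L 0 v = h • v ∧ ρ.H 0 v = h' • v) ∧
    (∀ m : ℤ, m < 0 → ρ.L m v = 0 ∧ ρ.H m v = 0 ∧ ρ.Gp m v = 0 ∧ ρ.Gm m v = 0) ∧
    ρ.Gm 0 v = 0

end RamondRep

/-- The families `(u i)ᵢ, (upm i)ᵢ` (even, `upm = v^{+-}`) and `(up i)ᵢ, (um i)ᵢ`
(odd) realize the `𝔤`-module `R_{a,b,c}` inside `(W, σ)`: together they form a
basis, spanning the even/odd parts as indicated, `c₀ = 0`, and the action is given
by the `R_{a,b,c}` formulas. -/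
def RamondRep.IsRabc {W : Type} [AddCommGroup W] [Module ℂ W] (σ : RamondRep W)
    (u upm up um : ℤ → W) (a b c : ℂ) : Prop :=
  σ.c₀ = 0 ∧
  LinearIndependent ℂ (fun x : (Bool × Bool) × ℤ =>
    if x.1.1 then (if x.1.2 then um x.2 else up x.2)
    else (if x.1.2 then upm x.2 else u x.2)) ∧
  Submodule.span ℂ
    (Set.range u ∪ Set.range upm ∪ Set.range up ∪ Set.range um) = ⊤ ∧
  σ.even = Submodule.span ℂ (Set.range u ∪ Set.range upm) ∧
  σ.odd = Submodule.span ℂ (Set.range up ∪ Set.range um) ∧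
  (∀ m i : ℤ, σ.L m (u i) = (a + (i : ℂ) + b * (m : ℂ)) • u (m + i)) ∧
  (∀ m k : ℤ, σ.L m (up k) = (a + (k : ℂ) + (b - 1 / 2) * (m : ℂ)) • up (m + k)) ∧
  (∀ m k : ℤ, σ.L m (um k) = (a + (k : ℂ) + (b - 1 / 2) * (m : ℂ)) • um (m + k)) ∧
  (∀ m i : ℤ, σ.L m (upm i) = (a + (i : ℂ) + (b - 1) * (m : ℂ)) • upm (m + i) +
    ((1 / 2 : ℂ) * (2 * b - c - 2) * (m : ℂ) ^ 2) • u (i + m)) ∧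
  (∀ m i : ℤ, σ.H m (u i) = c • u (m + i)) ∧
  (∀ m k : ℤ, σ.H m (up k) = (c + 1) • up (m + k)) ∧
  (∀ m k : ℤ, σ.H m (um k) = (c - 1) • um (m + k)) ∧
  (∀ m i : ℤ, σ.H m (upm i) = c • upm (m + i) -
    ((m : ℂ) * (2 * b - c - 2)) • u (m + i)) ∧
  (∀ r i : ℤ, σ.Gp r (u i) = up (r + i)) ∧
  (∀ r i : ℤ, σ.Gm r (u i) = um (r + i)) ∧
  (∀ r i : ℤ, σ.Gp r (up i) = 0) ∧
  (∀ r i : ℤ, σ.Gm r (um i) = 0) ∧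
  (∀ r k : ℤ, σ.Gp r (um k) = upm (k + r) +
    ((c + 2 - 2 * b) * (r : ℂ)) • u (k + r)) ∧
  (∀ r k : ℤ, σ.Gm r (up k) = -upm (r + k) -
    ((2 * a + 2 * (k : ℂ) + (2 * b + c) * (r : ℂ))) • u (k + r)) ∧
  (∀ r i : ℤ, σ.Gm r (upm i) =
    (-(2 * a + 2 * (i : ℂ) + (2 * b + c - 2) * (r : ℂ))) • um (r + i)) ∧
  (∀ r i : ℤ, σ.Gp r (upm i) = ((2 * b - c - 2) * (r : ℂ)) • up (r + i))

namespace Rabc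

/-- The underlying space of `R_{a,b,c}`. -/
abbrev Sp : Type := ((Bool × Bool) × ℤ) →₀ ℂ

/-- Basis vectors. -/
noncomputable def e (s : Bool × Bool) (i : ℤ) : Sp := Finsupp.single (s, i) (1 : ℂ)

/-- The operator determined by its values on the basis. -/
noncomputable def op (f : Bool × Bool → ℤ → Sp) : Sp →ₗ[ℂ] Sp :=
  Finsupp.linearCombination ℂ (fun x : (Bool × Bool) × ℤ => f x.1 x.2)

@[simp] lemma op_e (f : Bool × Bool → ℤ → Sp) (s : Bool × Bool) (i : ℤ) :
    op f (e s i) = f s i := by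
  simp [op, e]

lemma ext_e {f g : Sp →ₗ[ℂ] Sp} (h : ∀ s i, f (e s i) = g (e s i)) (v : Sp) : f v = g v := by
  have : f = g := by
    ext x
    exact congrArg (fun w : Sp => w _) (h x.1 x.2)
  rw [this]

variable (a b c : ℂ)

noncomputable def L (m : ℤ) : Sp →ₗ[ℂ] Sp := op fun s i => match s with
  | (false, false) => (a + (i : ℂ) + b * (m : ℂ)) • e (false, false) (m + i)
  | (false, true) => (a + (i : ℂ) + (b - 1) * (m : ℂ)) • e (false, true) (m + i) +
    ((1 / 2 : ℂ) * (2 * b - c - 2) * (m : ℂ) ^ 2) • e (false, false) (i + m)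
  | (true, t) => (a + (i : ℂ) + (b - 1 / 2) * (m : ℂ)) • e (true, t) (m + i)

noncomputable def H (m : ℤ) : Sp →ₗ[ℂ] Sp := op fun s i => match s with
  | (false, false) => c • e (false, false) (m + i)
  | (false, true) => c • e (false, true) (m + i) -
    ((m : ℂ) * (2 * b - c - 2)) • e (false, false) (m + i)
  | (true, false) => (c + 1) • e (true, false) (m + i)
  | (true, true) => (c - 1) • e (true, true) (m + i)

noncomputable def Gp (r : ℤ) : Sp →ₗ[ℂ] Sp := op fun s i => match s with
  | (false, false) => e (true, false) (r + i)
  | (false, true) => ((2 * b - c - 2) * (r : ℂ)) • e (true, false) (r + i)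
  | (true, false) => 0
  | (true, true) => e (false, true) (i + r) +
    ((c + 2 - 2 * b) * (r : ℂ)) • e (false, false) (i + r)

noncomputable def Gm (r : ℤ) : Sp →ₗ[ℂ] Sp := op fun s i => match s with
  | (false, false) => e (true, true) (r + i)
  | (false, true) =>
    (-(2 * a + 2 * (i : ℂ) + (2 * b + c - 2) * (r : ℂ))) • e (true, true) (r + i)
  | (true, false) => -e (false, true) (r + i) -
    ((2 * a + 2 * (i : ℂ) + (2 * b + c) * (r : ℂ))) • e (false, false) (i + r)
  | (true, true) => 0

/-- The part of given parity. -/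
noncomputable def part (s : Bool) : Submodule ℂ Sp :=
  Submodule.span ℂ (Set.range (e (s, false)) ∪ Set.range (e (s, true)))

lemma e_mem (s t : Bool) (i : ℤ) : e (s, t) i ∈ part s := by
  apply Submodule.subset_span
  cases t
  · exact Or.inl ⟨i, rfl⟩
  · exact Or.inr ⟨i, rfl⟩

lemma part_eq (s : Bool) :
    part s = Finsupp.supported ℂ ℂ {x : (Bool × Bool) × ℤ | x.1.1 = s} := by
  rw [Finsupp.supported_eq_span_single, part]
  congr 1
  ext w
  constructor
  · rintro (⟨i, rfl⟩ | ⟨i, rfl⟩)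
    · exact ⟨((s, false), i), rfl, rfl⟩
    · exact ⟨((s, true), i), rfl, rfl⟩
  · rintro ⟨⟨⟨s', t⟩, i⟩, h, rfl⟩
    obtain rfl : s' = s := h
    cases t
    · exact Or.inl ⟨i, rfl⟩
    · exact Or.inr ⟨i, rfl⟩

lemma isCompl_part : IsCompl (part false) (part true) := by
  rw [part_eq, part_eq]
  constructor
  · apply Finsupp.disjoint_supported_supported
    rw [Set.disjoint_left]
    intro x h h'
    simp_all
  · apply Finsupp.codisjoint_supported_supported
    rw [codisjoint_iff]
    ext x
    simp

lemma map_part {f : Sp →ₗ[ℂ] Sp} {s s' : Bool} (h : ∀ t i, f (e (s, t) i) ∈ part s') :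
    ∀ v ∈ part s, f v ∈ part s' := by
  intro v hv
  have : part s ≤ (part s').comap f := by
    refine Submodule.span_le.2 ?_
    rintro w (⟨i, rfl⟩ | ⟨i, rfl⟩)
    · exact h _ i
    · exact h _ i
  exact this hv

lemma smul_e_mem (s t : Bool) (i : ℤ) (z : ℂ) : z • e (s, t) i ∈ part s :=
  Submodule.smul_mem _ _ (e_mem s t i)

set_option linter.unusedSimpArgs false in
set_option maxHeartbeats 4000000 in
/-- The representation `R_{a,b,c}`. -/
noncomputable def rep : RamondRep Sp where
  L := L a b c
  H := H b c
  Gp := Gp b c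
  Gm := Gm a b c
  c₀ := 0
  even := part false
  odd := part true
  grading := isCompl_part
  L_even m := map_part fun t i => by
    cases t <;> simp only [L, op_e] <;>
      simp only [e_mem, smul_e_mem, add_mem, sub_mem, neg_mem, zero_mem]
  L_odd m := map_part fun t i => by
    cases t <;> simp only [L, op_e] <;>
      simp only [e_mem, smul_e_mem, add_mem, sub_mem, neg_mem, zero_mem]
  H_even m := map_part fun t i => by
    cases t <;> simp only [H, op_e] <;>
      simp only [e_mem, smul_e_mem, add_mem, sub_mem, neg_mem, zero_mem]
  H_odd m := map_part fun t i => by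
    cases t <;> simp only [H, op_e] <;>
      simp only [e_mem, smul_e_mem, add_mem, sub_mem, neg_mem, zero_mem]
  Gp_even m := map_part fun t i => by
    cases t <;> simp only [Gp, op_e] <;>
      simp only [e_mem, smul_e_mem, add_mem, sub_mem, neg_mem, zero_mem]
  Gp_odd m := map_part fun t i => by
    cases t <;> simp only [Gp, op_e] <;>
      simp only [e_mem, smul_e_mem, add_mem, sub_mem, neg_mem, zero_mem]
  Gm_even m := map_part fun t i => by
    cases t <;> simp only [Gm, op_e] <;>
      simp only [e_mem, smul_e_mem, add_mem, sub_mem, neg_mem, zero_mem]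
  Gm_odd m := map_part fun t i => by
    cases t <;> simp only [Gm, op_e] <;>
      simp only [e_mem, smul_e_mem, add_mem, sub_mem, neg_mem, zero_mem]
  rel_LL m n w := by
    simp only [mul_zero, zero_smul, add_zero]
    refine ext_e (f := L a b c m ∘ₗ L a b c n - L a b c n ∘ₗ L a b c m)
      (g := ((n : ℂ) - (m : ℂ)) • L a b c (m + n)) ?_ w
    rintro ⟨s, t⟩ i
    cases s <;> cases t <;>
      simp only [L, H, Gp, Gm, op_e, LinearMap.sub_apply, LinearMap.add_apply, LinearMap.neg_apply,
        LinearMap.comp_apply, LinearMap.smul_apply, LinearMap.zero_apply, map_add, map_sub,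
        map_neg, map_smul, map_zero, Int.cast_add, Int.add_comm,
        Int.add_left_comm] <;>
      module
  rel_HH m n w := by
    simp only [mul_zero, zero_smul, add_zero]
    refine ext_e (f := H b c m ∘ₗ H b c n - H b c n ∘ₗ H b c m)
      (g := 0) ?_ w
    rintro ⟨s, t⟩ i
    cases s <;> cases t <;>
      simp only [L, H, Gp, Gm, op_e, LinearMap.sub_apply, LinearMap.add_apply, LinearMap.neg_apply,
        LinearMap.comp_apply, LinearMap.smul_apply, LinearMap.zero_apply, map_add, map_sub,
        map_neg, map_smul, map_zero, Int.cast_add, Int.add_comm,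
        Int.add_left_comm] <;>
      module
  rel_LH m n w := by
    refine ext_e (f := L a b c m ∘ₗ H b c n - H b c n ∘ₗ L a b c m)
      (g := (n : ℂ) • H b c (m + n)) ?_ w
    rintro ⟨s, t⟩ i
    cases s <;> cases t <;>
      simp only [L, H, Gp, Gm, op_e, LinearMap.sub_apply, LinearMap.add_apply, LinearMap.neg_apply,
        LinearMap.comp_apply, LinearMap.smul_apply, LinearMap.zero_apply, map_add, map_sub,
        map_neg, map_smul, map_zero, Int.cast_add, Int.add_comm,
        Int.add_left_comm] <;>
      module
  rel_LGp m p w := by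
    refine ext_e (f := L a b c m ∘ₗ Gp b c p - Gp b c p ∘ₗ L a b c m)
      (g := ((p : ℂ) - (m : ℂ) / 2) • Gp b c (p + m)) ?_ w
    rintro ⟨s, t⟩ i
    cases s <;> cases t <;>
      simp only [L, H, Gp, Gm, op_e, LinearMap.sub_apply, LinearMap.add_apply, LinearMap.neg_apply,
        LinearMap.comp_apply, LinearMap.smul_apply, LinearMap.zero_apply, map_add, map_sub,
        map_neg, map_smul, map_zero, Int.cast_add, Int.add_comm,
        Int.add_left_comm] <;>
      module
  rel_LGm m p w := by
    refine ext_e (f := L a b c m ∘ₗ Gm a b c p - Gm a b c p ∘ₗ L a b c m)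
      (g := ((p : ℂ) - (m : ℂ) / 2) • Gm a b c (p + m)) ?_ w
    rintro ⟨s, t⟩ i
    cases s <;> cases t <;>
      simp only [L, H, Gp, Gm, op_e, LinearMap.sub_apply, LinearMap.add_apply, LinearMap.neg_apply,
        LinearMap.comp_apply, LinearMap.smul_apply, LinearMap.zero_apply, map_add, map_sub,
        map_neg, map_smul, map_zero, Int.cast_add, Int.add_comm,
        Int.add_left_comm] <;>
      module
  rel_HGp m p w := by
    refine ext_e (f := H b c m ∘ₗ Gp b c p - Gp b c p ∘ₗ H b c m)
      (g := Gp b c (m + p)) ?_ w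
    rintro ⟨s, t⟩ i
    cases s <;> cases t <;>
      simp only [L, H, Gp, Gm, op_e, LinearMap.sub_apply, LinearMap.add_apply, LinearMap.neg_apply,
        LinearMap.comp_apply, LinearMap.smul_apply, LinearMap.zero_apply, map_add, map_sub,
        map_neg, map_smul, map_zero, Int.cast_add, Int.add_comm,
        Int.add_left_comm] <;>
      module
  rel_HGm m p w := by
    refine ext_e (f := H b c m ∘ₗ Gm a b c p - Gm a b c p ∘ₗ H b c m)
      (g := -Gm a b c (m + p)) ?_ w
    rintro ⟨s, t⟩ i
    cases s <;> cases t <;>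
      simp only [L, H, Gp, Gm, op_e, LinearMap.sub_apply, LinearMap.add_apply, LinearMap.neg_apply,
        LinearMap.comp_apply, LinearMap.smul_apply, LinearMap.zero_apply, map_add, map_sub,
        map_neg, map_smul, map_zero, Int.cast_add, Int.add_comm,
        Int.add_left_comm] <;>
      module
  rel_GpGm p q w := by
    simp only [mul_zero, zero_smul, add_zero]
    refine ext_e (f := Gp b c p ∘ₗ Gm a b c q + Gm a b c q ∘ₗ Gp b c p)
      (g := (-2 : ℂ) • L a b c (p + q) + ((p : ℂ) - (q : ℂ)) • H b c (p + q)) ?_ w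
    rintro ⟨s, t⟩ i
    cases s <;> cases t <;>
      simp only [L, H, Gp, Gm, op_e, LinearMap.sub_apply, LinearMap.add_apply, LinearMap.neg_apply,
        LinearMap.comp_apply, LinearMap.smul_apply, LinearMap.zero_apply, map_add, map_sub,
        map_neg, map_smul, map_zero, Int.cast_add, Int.add_comm,
        Int.add_left_comm] <;>
      module
  rel_GpGp p q w := by
    refine ext_e (f := Gp b c p ∘ₗ Gp b c q + Gp b c q ∘ₗ Gp b c p)
      (g := 0) ?_ w
    rintro ⟨s, t⟩ i
    cases s <;> cases t <;>
      simp only [L, H, Gp, Gm, op_e, LinearMap.sub_apply, LinearMap.add_apply, LinearMap.neg_apply,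
        LinearMap.comp_apply, LinearMap.smul_apply, LinearMap.zero_apply, map_add, map_sub,
        map_neg, map_smul, map_zero, Int.cast_add, Int.add_comm,
        Int.add_left_comm] <;>
      module
  rel_GmGm p q w := by
    refine ext_e (f := Gm a b c p ∘ₗ Gm a b c q + Gm a b c q ∘ₗ Gm a b c p)
      (g := 0) ?_ w
    rintro ⟨s, t⟩ i
    cases s <;> cases t <;>
      simp only [L, H, Gp, Gm, op_e, LinearMap.sub_apply, LinearMap.add_apply, LinearMap.neg_apply,
        LinearMap.comp_apply, LinearMap.smul_apply, LinearMap.zero_apply, map_add, map_sub,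
        map_neg, map_smul, map_zero, Int.cast_add, Int.add_comm,
        Int.add_left_comm] <;>
      module

lemma rep_L (m : ℤ) : (rep a b c).L m = L a b c m := rfl

lemma rep_H (m : ℤ) : (rep a b c).H m = H b c m := rfl

lemma rep_Gp (m : ℤ) : (rep a b c).Gp m = Gp b c m := rfl

lemma rep_Gm (m : ℤ) : (rep a b c).Gm m = Gm a b c m := rfl

lemma linInd : LinearIndependent ℂ (fun x : (Bool × Bool) × ℤ =>
    if x.1.1 then (if x.1.2 then e (true, true) x.2 else e (true, false) x.2)
    else (if x.1.2 then e (false, true) x.2 else e (false, false) x.2)) := by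
  have h := (Finsupp.basisSingleOne (R := ℂ) (ι := (Bool × Bool) × ℤ)).linearIndependent
  have h2 : (fun x : (Bool × Bool) × ℤ =>
    if x.1.1 then (if x.1.2 then e (true, true) x.2 else e (true, false) x.2)
    else (if x.1.2 then e (false, true) x.2 else e (false, false) x.2)) =
      Finsupp.basisSingleOne (R := ℂ) (ι := (Bool × Bool) × ℤ) := by
    funext x
    obtain ⟨⟨s, t⟩, i⟩ := x
    cases s <;> cases t <;> simp [e]
  rw [h2]
  exact h

lemma rep_isRabc : (rep a b c).IsRabc (e (false, false)) (e (false, true)) (e (true, false))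
    (e (true, true)) a b c := by
  refine ⟨rfl, linInd, ?_, rfl, rfl, ?_, ?_, ?_, ?_, ?_, ?_, ?_, ?_, ?_, ?_, ?_, ?_,
    ?_, ?_, ?_, ?_⟩
  · have h := isCompl_part.sup_eq_top
    rw [part, part, ← Submodule.span_union, ← Set.union_assoc] at h
    exact h
  all_goals
    intro m i
    simp only [rep_L, rep_H, rep_Gp, rep_Gm]
    simp only [L, H, Gp, Gm, op_e]

end Rabc

/-- for every `a, b, c ∈ ℂ` the formulas defining `R_{a,b,c}`
determine a module over the `N = 2` Ramond algebra (with `c₀ = 0`) on the vector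
space with even basis `{v_i, v_i^{+-}}` and odd basis `{v_i^+, v_i^-}`. -/
theorem stmt14 (a b c : ℂ) :
    ∃ σ : RamondRep (((Bool × Bool) × ℤ) →₀ ℂ),
      σ.IsRabc (fun i => Finsupp.single ((false, false), i) (1 : ℂ))
        (fun i => Finsupp.single ((false, true), i) (1 : ℂ))
        (fun i => Finsupp.single ((true, false), i) (1 : ℂ))
        (fun i => Finsupp.single ((true, true), i) (1 : ℂ)) a b c := by
  exact ⟨Rabc.rep a b c, Rabc.rep_isRabc a b c⟩
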